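/- Suppose p = Σᵢ₌₁ˢ qᵢ² in ℝ[x₁,…,xₙ] and F is a face of the Newton polytope New(p). Let F_{z/2} = (½F) ∩ ℕⁿ, qᵢ' = Proj(qᵢ, F_{z/2}), qᵢ'' = qᵢ − qᵢ', Tᵢ' = Support(qᵢ'), Tᵢ'' = Support(qᵢ''). Then there exists an affine function π on ℝⁿ such that (1) F ⊆ {y : π(y) = 0}, (2) 2Tᵢ' ⊆ {y : π(y) = 0} for every i, and (3) 2Tᵢ'' ⊆ {y : π(y) > 0} for every i (where 2S = {2a : a ∈ S} and ½F = {a/2 : a ∈ F}). -/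

import Mathlib

open MvPolynomial
open scoped Classical

noncomputable section

/-- Embed an exponent vector `a ∈ ℕⁿ` into `ℝⁿ`. -/
def toR {n : ℕ} (a : Fin n →₀ ℕ) : Fin n → ℝ := fun i => (a i : ℝ)

/-- `p` is a sum of squares of polynomials. -/
def IsSOS {n : ℕ} (p : MvPolynomial (Fin n) ℝ) : Prop :=
  ∃ (s : ℕ) (q : Fin s → MvPolynomial (Fin n) ℝ), p = ∑ i, (q i) ^ 2

/-- `Proj(p,T)` for `T ⊆ ℝⁿ`: delete every term of `p` whose exponent vector is not in `T`. -/
def projR {n : ℕ} (p : MvPolynomial (Fin n) ℝ) (T : Set (Fin n → ℝ)) :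
    MvPolynomial (Fin n) ℝ :=
  ∑ a ∈ p.support, if toR a ∈ T then monomial a (p.coeff a) else 0

/-- `Proj(p,T)` for `T ⊆ ℕⁿ`. -/
def projN {n : ℕ} (p : MvPolynomial (Fin n) ℝ) (T : Set (Fin n →₀ ℕ)) :
    MvPolynomial (Fin n) ℝ :=
  ∑ a ∈ p.support, if a ∈ T then monomial a (p.coeff a) else 0

/-- The Newton polytope of `p`: convex hull of its support in `ℝⁿ`. -/
def newton {n : ℕ} (p : MvPolynomial (Fin n) ℝ) : Set (Fin n → ℝ) :=
  convexHull ℝ (toR '' ↑p.support)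

/-- `F` is an (exposed) face of `N`: `F ⊆ N`, and either `F = N` or there is an
affine function vanishing on `F` and strictly positive on `N \ F`. -/
def IsFace {n : ℕ} (N F : Set (Fin n → ℝ)) : Prop :=
  F ⊆ N ∧ (F = N ∨ ∃ π : (Fin n → ℝ) →ᵃ[ℝ] ℝ,
    (∀ x ∈ F, π x = 0) ∧ ∀ x ∈ N \ F, 0 < π x)

/-- `SOSS(p,G)`: whenever `p` is SOS, it has an SOS decomposition all of whose
summands have support contained in `G`. -/
def SOSS {n : ℕ} (p : MvPolynomial (Fin n) ℝ) (G : Finset (Fin n →₀ ℕ)) : Prop :=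
  IsSOS p → ∃ (s : ℕ) (q : Fin s → MvPolynomial (Fin n) ℝ),
    p = ∑ i, (q i) ^ 2 ∧ ∀ i, (q i).support ⊆ G

/-- `V(p,G)`: elements `a ∈ G` whose double has the unique decomposition `a + a` in `G + G`. -/
def VSet {n : ℕ} (G : Finset (Fin n →₀ ℕ)) : Set (Fin n →₀ ℕ) :=
  {a | a ∈ G ∧ ∀ b ∈ G, ∀ r ∈ G, b + r = a + a → b = a ∧ r = a}

/-- Membership in `Relat(a)` (least fixed point of the recursive definition):
`Relat(a) = {a/2}` if the unique decomposition of `a` in `G + G` is `a/2 + a/2`;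
otherwise `Relat(a)` is the union of `Relat(2b) ∪ Relat(2r)` over decompositions
`a = b + r` with `b ≠ r`, `b, r ∈ G`; and `Relat(a) = ∅` if `a ∉ G + G`. -/
inductive RelatMem {n : ℕ} (G : Finset (Fin n →₀ ℕ)) :
    (Fin n →₀ ℕ) → (Fin n →₀ ℕ) → Prop
  | base (a c : Fin n →₀ ℕ) (hc : c ∈ G) (hcc : c + c = a)
      (huniq : ∀ b ∈ G, ∀ r ∈ G, b + r = a → b = c) : RelatMem G a c
  | stepL (a b r v : Fin n →₀ ℕ) (hb : b ∈ G) (hr : r ∈ G) (hne : b ≠ r)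
      (hbr : b + r = a) (hv : RelatMem G (b + b) v) : RelatMem G a v
  | stepR (a b r v : Fin n →₀ ℕ) (hb : b ∈ G) (hr : r ∈ G) (hne : b ≠ r)
      (hbr : b + r = a) (hv : RelatMem G (r + r) v) : RelatMem G a v

/-- `Relat(a)` as a set. -/
def Relat {n : ℕ} (G : Finset (Fin n →₀ ℕ)) (a : Fin n →₀ ℕ) : Set (Fin n →₀ ℕ) :=
  {v | RelatMem G a v}

/-- `σ(T) = {r ∈ G : Relat(2r) ⊆ T}`. -/
def sigmaSet {n : ℕ} (G : Finset (Fin n →₀ ℕ)) (T : Set (Fin n →₀ ℕ)) :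
    Set (Fin n →₀ ℕ) :=
  {r | r ∈ G ∧ Relat G (r + r) ⊆ T}

/-- `p` is a split polynomial with respect to `T₁, …, T_u ⊆ V(p,G)`. -/
def IsSplit {n : ℕ} (p : MvPolynomial (Fin n) ℝ) (G : Finset (Fin n →₀ ℕ))
    (u : ℕ) (T : Fin u → Set (Fin n →₀ ℕ)) : Prop :=
  SOSS p G ∧ (∀ i, T i ⊆ VSet G) ∧ (∀ i, (T i).Nonempty) ∧
  (∀ i j, i ≠ j → Disjoint (T i) (T j)) ∧
  (∀ i, ∀ a ∈ sigmaSet G (T i), ∀ b ∈ sigmaSet G (T i), Relat G (a + b) ⊆ T i) ∧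
  ∀ a ∈ p.support, ∃! i, Relat G a ⊆ T i

/-- The sub-polynomial `Σ_{a ∈ Support(p), Relat(a) ⊆ T} c_a x^a` of `p`. -/
def projRelat {n : ℕ} (p : MvPolynomial (Fin n) ℝ) (G : Finset (Fin n →₀ ℕ))
    (T : Set (Fin n →₀ ℕ)) : MvPolynomial (Fin n) ℝ :=
  ∑ a ∈ p.support, if Relat G a ⊆ T then monomial a (p.coeff a) else 0

/-- `p` is a convex cover polynomial: some pairwise disjoint faces of `New(p)`
cover `Support(p)`. -/
def IsConvexCover {n : ℕ} (p : MvPolynomial (Fin n) ℝ) : Prop :=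
  ∃ (u : ℕ) (F : Fin u → Set (Fin n → ℝ)),
    (∀ i, IsFace (newton p) (F i)) ∧
    (∀ i j, i ≠ j → Disjoint (F i) (F j)) ∧
    toR '' ↑p.support ⊆ ⋃ i, F i

end

/-!
By Krein–Milman, the polytope `K` spanned by the supports of all `qᵢ` is the convex hull of its
vertices. A vertex `v` of `K` is the midpoint of two points of `K` only if both equal `v`, so the
coefficient of `x²ᵛ` in `∑ qᵢ²` is the sum of the squares of the coefficients of `xᵛ` in the `qᵢ`.
No cancellation is possible, hence `2v ∈ New(p)`, and by convexity `K ⊆ ½ New(p)`. An affine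
function cutting out `F` in `New(p)` is therefore positive at `2a` for every exponent `a ∉ ½F` of
some `qᵢ`.
-/

section Convex

variable {E : Type*} [AddCommGroup E]

theorem uniqueAdd_self_of_mem_extremePoints {𝕜 : Type*} [Field 𝕜] [LinearOrder 𝕜]
    [IsStrictOrderedRing 𝕜] [Module 𝕜 E] {K : Set E} {A B : Finset E} {x : E}
    (hA : ↑A ⊆ K) (hB : ↑B ⊆ K) (hx : x ∈ K.extremePoints 𝕜) : UniqueAdd A B x x := by
  intro y z hy hz hyz
  have midpoint_eq : midpoint 𝕜 y z = x := by
    rw [midpoint_eq_smul_add, hyz, ← midpoint_eq_smul_add, midpoint_self]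
  exact (mem_extremePoints.1 hx).2 y (hA hy) z (hB hz)
    (midpoint_eq ▸ midpoint_mem_openSegment y z)

theorem convexHull_extremePoints_convexHull_of_finite [Module ℝ E] [TopologicalSpace E] [T2Space E]
    [IsTopologicalAddGroup E] [ContinuousSMul ℝ E] [LocallyConvexSpace ℝ E]
    {S : Set E} (hS : S.Finite) :
    convexHull ℝ ((convexHull ℝ S).extremePoints ℝ) = convexHull ℝ S := by
  have vertices_finite := hS.subset (extremePoints_convexHull_subset (𝕜 := ℝ))
  rw [← (vertices_finite.isClosed_convexHull (𝕜 := ℝ)).closure_eq]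
  exact closure_convexHull_extremePoints (hS.isCompact_convexHull (𝕜 := ℝ)) (convex_convexHull ℝ S)

open scoped Pointwise in
theorem mem_inv_two_smul_set_iff_add_self_mem {𝕜 : Type*} [DivisionRing 𝕜] [NeZero (2 : 𝕜)]
    [Module 𝕜 E] {S : Set E} {x : E} : x ∈ (2⁻¹ : 𝕜) • S ↔ x + x ∈ S := by
  rw [Set.mem_inv_smul_set_iff₀ two_ne_zero, two_smul]

end Convex

section SumOfSquares

variable {σ R ι : Type*} {s : Finset ι} {v : σ →₀ ℕ}

theorem coeff_add_self_sum_sq_of_uniqueAdd [CommSemiring R] {q : ι → MvPolynomial σ R}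
    (hv : ∀ j ∈ s, UniqueAdd (q j).support (q j).support v v) :
    coeff (v + v) (∑ j ∈ s, q j ^ 2) = ∑ j ∈ s, coeff v (q j) ^ 2 := by
  rw [coeff_sum]
  refine Finset.sum_congr rfl fun j hj => ?_
  rw [sq, sq]
  exact AddMonoidAlgebra.coeff_mul_add_of_uniqueAdd (hv j hj)

theorem add_self_mem_support_sum_sq_of_uniqueAdd [CommRing R] [LinearOrder R]
    [IsStrictOrderedRing R] {q : ι → MvPolynomial σ R} {i : ι} (hi : i ∈ s)
    (hvi : v ∈ (q i).support) (hv : ∀ j ∈ s, UniqueAdd (q j).support (q j).support v v) :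
    v + v ∈ (∑ j ∈ s, q j ^ 2).support := by
  rw [mem_support_iff, coeff_add_self_sum_sq_of_uniqueAdd hv]
  have coeff_sq_pos : 0 < coeff v (q i) ^ 2 := sq_pos_of_ne_zero (mem_support_iff.1 hvi)
  exact (Finset.sum_pos' (fun j _ => sq_nonneg (coeff v (q j))) ⟨i, hi, coeff_sq_pos⟩).ne'

end SumOfSquares

theorem IsFace.exists_affineMap {n : ℕ} {N F : Set (Fin n → ℝ)} (hF : IsFace N F) :
    ∃ π : (Fin n → ℝ) →ᵃ[ℝ] ℝ, (∀ x ∈ F, π x = 0) ∧ ∀ x ∈ N \ F, 0 < π x := by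
  obtain ⟨-, rfl | h⟩ := hF
  · exact ⟨0, fun _ _ => rfl, fun x hx => absurd hx.1 hx.2⟩
  · exact h

section Exponents

variable {n : ℕ}

theorem toR_injective : Function.Injective (toR (n := n)) := fun _ _ h =>
  Finsupp.ext fun i => Nat.cast_injective (congrFun h i)

theorem toR_add (a b : Fin n →₀ ℕ) : toR (a + b) = toR a + toR b :=
  funext fun i => Nat.cast_add (a i) (b i)

theorem toR_mem_newton {p : MvPolynomial (Fin n) ℝ} {a : Fin n →₀ ℕ} (ha : a ∈ p.support) :
    toR a ∈ newton p :=
  subset_convexHull ℝ _ (Set.mem_image_of_mem toR ha)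

theorem uniqueAdd_self_of_toR_mem_extremePoints {A : Finset (Fin n →₀ ℕ)} {v : Fin n →₀ ℕ}
    (hv : toR v ∈ (convexHull ℝ (toR '' ↑A)).extremePoints ℝ) : UniqueAdd A A v v := by
  have image_subset : ↑(A.image toR) ⊆ convexHull ℝ (toR '' (A : Set (Fin n →₀ ℕ))) := by
    rw [Finset.coe_image]
    exact subset_convexHull ℝ _
  exact UniqueAdd.of_addHom_image ⟨toR, toR_add⟩
    (fun _ _ _ _ _ h => ⟨toR_injective h.1, toR_injective h.2⟩)
    (uniqueAdd_self_of_mem_extremePoints image_subset image_subset hv)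

theorem coeff_projR (p : MvPolynomial (Fin n) ℝ) (T : Set (Fin n → ℝ)) (a : Fin n →₀ ℕ) :
    coeff a (projR p T) = if toR a ∈ T then coeff a p else 0 := by
  rw [projR, coeff_sum, Finset.sum_eq_single a]
  · split_ifs <;> simp
  · intro b _ hb
    split_ifs <;> simp [hb]
  · intro ha
    simp [notMem_support_iff.1 ha]

theorem mem_support_projR {p : MvPolynomial (Fin n) ℝ} {T : Set (Fin n → ℝ)} {a : Fin n →₀ ℕ} :
    a ∈ (projR p T).support ↔ a ∈ p.support ∧ toR a ∈ T := by
  rw [mem_support_iff, coeff_projR, ite_ne_right_iff, mem_support_iff, and_comm]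

theorem mem_support_sub_projR {p : MvPolynomial (Fin n) ℝ} {T : Set (Fin n → ℝ)}
    {a : Fin n →₀ ℕ} : a ∈ (p - projR p T).support ↔ a ∈ p.support ∧ toR a ∉ T := by
  rw [mem_support_iff, coeff_sub, coeff_projR, mem_support_iff]
  split_ifs with h <;> simp [h]

end Exponents

section NewtonPolytope

open scoped Pointwise

variable {n : ℕ} {ι : Type*} {s : Finset ι} {q : ι → MvPolynomial (Fin n) ℝ}

theorem extremePoints_convexHull_biUnion_support_subset :
    (convexHull ℝ (toR '' ↑(s.biUnion fun j => (q j).support))).extremePoints ℝ ⊆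
      (2⁻¹ : ℝ) • newton (∑ j ∈ s, q j ^ 2) := by
  intro x hx
  obtain ⟨v, hv, rfl⟩ := extremePoints_convexHull_subset hx
  obtain ⟨i, hi, hvi⟩ := Finset.mem_biUnion.1 hv
  have uniqueAdd_support (j) (hj : j ∈ s) : UniqueAdd (q j).support (q j).support v v :=
    have support_subset := Finset.subset_biUnion_of_mem (fun j => (q j).support) hj
    (uniqueAdd_self_of_toR_mem_extremePoints hx).mono support_subset support_subset
  rw [mem_inv_two_smul_set_iff_add_self_mem, ← toR_add]
  exact toR_mem_newton (add_self_mem_support_sum_sq_of_uniqueAdd hi hvi uniqueAdd_support)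

theorem newton_subset_inv_two_smul_newton_sum_sq {i : ι} (hi : i ∈ s) :
    newton (q i) ⊆ (2⁻¹ : ℝ) • newton (∑ j ∈ s, q j ^ 2) := by
  set A := s.biUnion fun j => (q j).support
  have support_subset : (q i).support ⊆ A :=
    Finset.subset_biUnion_of_mem (fun j => (q j).support) hi
  calc newton (q i)
      ⊆ convexHull ℝ (toR '' ↑A) := convexHull_mono (Set.image_mono support_subset)
    _ = convexHull ℝ ((convexHull ℝ (toR '' ↑A)).extremePoints ℝ) :=
      (convexHull_extremePoints_convexHull_of_finite (A.finite_toSet.image toR)).symm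
    _ ⊆ (2⁻¹ : ℝ) • newton (∑ j ∈ s, q j ^ 2) :=
      convexHull_min extremePoints_convexHull_biUnion_support_subset
        ((convex_convexHull ℝ _).smul _)

end NewtonPolytope

open scoped Pointwise in
/-- separating affine function for a face of the Newton polytope of an SOS
polynomial `p = Σ qᵢ²`, vanishing on `F` and on the doubled supports of
`qᵢ' = Proj(qᵢ, ½F ∩ ℕⁿ)`, and positive on the doubled supports of `qᵢ'' = qᵢ - qᵢ'`. -/
theorem statement1 {n : ℕ} (p : MvPolynomial (Fin n) ℝ) (s : ℕ)
    (q : Fin s → MvPolynomial (Fin n) ℝ) (hp : p = ∑ i, (q i) ^ 2)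
    (F : Set (Fin n → ℝ)) (hF : IsFace (newton p) F) :
    ∃ π : (Fin n → ℝ) →ᵃ[ℝ] ℝ,
      (∀ x ∈ F, π x = 0) ∧
      (∀ i, ∀ a ∈ (projR (q i) ((2⁻¹ : ℝ) • F)).support, π (toR a + toR a) = 0) ∧
      (∀ i, ∀ a ∈ (q i - projR (q i) ((2⁻¹ : ℝ) • F)).support, 0 < π (toR a + toR a)) := by
  subst hp
  obtain ⟨π, hπF, hπpos⟩ := hF.exists_affineMap
  refine ⟨π, hπF, fun i a ha => hπF _ ?_, fun i a ha => hπpos _ ⟨?_, ?_⟩⟩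
  · exact mem_inv_two_smul_set_iff_add_self_mem.1 (mem_support_projR.1 ha).2
  · have ha_newton : toR a ∈ newton (q i) := toR_mem_newton (mem_support_sub_projR.1 ha).1
    exact mem_inv_two_smul_set_iff_add_self_mem.1
      (newton_subset_inv_two_smul_newton_sum_sq (Finset.mem_univ i) ha_newton)
  · exact fun h => (mem_support_sub_projR.1 ha).2 (mem_inv_two_smul_set_iff_add_self_mem.2 h)
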